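/- Let Ñ ≥ 5 be an integer, define α_Ñ = 2k_c − 1 − 2·s_{k_c−1}/(s_{k_c} − s_{k_c−1}), and let K_c ∈ (1/4, 1/2) be the unique root of 4πK + sin(4πK) − 4 sin(2πK) = 0 in that interval. Then α_Ñ/Ñ ≤ 2K_c + 2/Ñ + 4π/(3Ñ²). Moreover, for every integer m ≥ 1 the maximum connectivity μ^{(mÑ,m)} of the feasible vectors for (mÑ, m) satisfies μ^{(mÑ,m)} ≤ α_Ñ/Ñ, and μ^{(mÑ,m)} → α_Ñ/Ñ as m → ∞. -/

import Mathlib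

open Real Finset Filter

/-- `x : ℕ → ℝ` is a feasible vector for `(N, p)`. -/
def feasible (N p : ℕ) (x : ℕ → ℝ) : Prop :=
  (∀ l ∈ Finset.Icc 1 (N - 1), x l = 0 ∨ x l = 1) ∧
  (∀ l ∈ Finset.Icc 1 (N - 1), x l = x (N - l)) ∧
  (∀ k ∈ Finset.Icc 1 (N - 1),
    ∑ l ∈ Finset.Icc 1 (N - 1),
      x l * Real.cos (2 * π * p * l / N) * (-1 + Real.cos (2 * π * k * l / N)) < 0)

/-!
Write `N = m n` with `n = Ñ`. The eigenvalue with index `q = p = m` weighs the offset `l` by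
`w l = cos (2πl/n) (cos (2πl/n) - 1)`, which depends only on `l` modulo `n`, and `s_k` is a partial
sum of these weights over one half-turn, starting at the largest cosine.

Upper bound: by weak linear programming duality the single constraint `∑ x l * w l < 0` already
bounds `∑ x l`. Past the critical index the weights are positive and grow as the cosine decreases,
so the optimal fractional solution links all offsets with cosine above `cos (2πk_c/n)`, and the
fraction `θ = -s_{k_c-1} / (s_{k_c} - s_{k_c-1})` of those at that level; its size is
`m (2k_c - 1 + 2θ) = m α`.

Limit: rounding the fractional solution to a symmetric `0/1` vector changes its size by a bounded
amount. The constraint `q = m` then holds by the choice of the rounding, `q = N - m` is the same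
constraint, and for every other `q` the all-ones vector has eigenvalue `0`, while the offsets which
were left out have negative cosine, so that removing them makes the eigenvalue negative.

Bound on `α`: with `h = 2π/n` and `y = (k + 1/2) h`, the geometric closed form of `4h s_k` differs
by at most `h²` from `G y = 2y + sin 2y - 4 sin y`, whose root in `(π/2, π)` is `u = 2πK_c > 2π/3`.
As `G' ≥ 3` on `[2π/3, π]`, `s_k < 0` forces `y < u + h²/3`; take `k = k_c - 1` and use `θ ≤ 1`.
-/

/-! ### Sums -/

section Sums

variable {M : Type*}

lemma sum_Icc_one_pred_eq_sum_range_sub [AddCommGroup M] {N : ℕ} (hN : 0 < N) (g : ℕ → M) :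
    ∑ l ∈ Icc 1 (N - 1), g l = ∑ l ∈ range N, g l - g 0 := by
  have interval : Icc 1 (N - 1) = Ico 1 N := by
    ext l
    simp only [mem_Icc, mem_Ico]
    omega
  rw [sum_range_eq_add_Ico g hN, add_sub_cancel_left, interval]

variable [AddCommMonoid M] {n : ℕ} {g : ℕ → M}

lemma sum_Ico_mul_of_periodic (hg : Function.Periodic g n) {a b : ℕ} (hab : a ≤ b) :
    ∑ l ∈ Ico (a * n) (b * n), g l = (b - a) • ∑ j ∈ range n, g j := by
  induction b, hab using Nat.le_induction with
  | base => simp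
  | succ b hab ih =>
    have block : ∑ l ∈ Ico (b * n) ((b + 1) * n), g l = ∑ j ∈ range n, g j := by
      rw [sum_Ico_eq_sum_range, ← Nat.sub_mul, Nat.add_sub_cancel_left, one_mul]
      exact sum_congr rfl fun j _ => by rw [add_comm]; exact hg.nat_mul b j
    rw [← sum_Ico_consecutive g (Nat.mul_le_mul_right n hab) (Nat.mul_le_mul_right n b.le_succ),
      ih, block, Nat.sub_add_comm hab, succ_nsmul]

lemma sum_range_mul_of_periodic (hg : Function.Periodic g n) (m : ℕ) :
    ∑ l ∈ range (m * n), g l = m • ∑ j ∈ range n, g j := by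
  simpa using sum_Ico_mul_of_periodic hg m.zero_le

lemma sum_window_of_periodic (hg : Function.Periodic g n) (h0 : g 0 = 0) {m d : ℕ}
    (hd : 2 * d ≤ m) :
    ∑ l ∈ range (m * n) with d * n < l ∧ l + d * n < m * n, g l =
      (m - 2 * d) • ∑ j ∈ range n, g j := by
  have : 2 * (d * n) ≤ m * n := by
    rw [← mul_assoc]
    exact Nat.mul_le_mul_right n hd
  have add_left_endpoint : ∑ l ∈ range (m * n) with d * n < l ∧ l + d * n < m * n, g l =
      ∑ l ∈ Ico (d * n) ((m - d) * n), g l := by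
    refine sum_subset (fun l => ?_) fun l hl hl' => ?_
    · simp only [mem_filter, mem_range, mem_Ico, Nat.sub_mul]
      omega
    · have : l = d * n := by
        simp only [mem_filter, mem_range, mem_Ico, Nat.sub_mul] at hl hl'
        omega
      rw [this, ← h0]
      exact hg.nat_mul_eq d
  rw [add_left_endpoint, sum_Ico_mul_of_periodic hg (by omega)]
  congr 1
  omega

end Sums

lemma two_mul_sin_half_mul_sum_cos (θ : ℝ) (n : ℕ) :
    2 * sin (θ / 2) * ∑ l ∈ range n, cos (l * θ) = sin ((n - 1 / 2) * θ) + sin (θ / 2) := by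
  induction n with
  | zero => simp [neg_mul, div_eq_inv_mul]
  | succ n ih =>
    have telescope := two_mul_sin_mul_cos (θ / 2) (n * θ)
    rw [show θ / 2 - n * θ = -((n - 1 / 2) * θ) by ring, sin_neg,
      show θ / 2 + n * θ = ((n + 1 : ℕ) - 1 / 2) * θ by push_cast; ring] at telescope
    rw [sum_range_succ, mul_add, ih, telescope]
    ring

lemma sum_cos_eq {θ : ℝ} (hθ : sin (θ / 2) ≠ 0) (k : ℕ) :
    ∑ l ∈ range (k + 1), cos (l * θ) = (sin ((k + 1 / 2) * θ) / sin (θ / 2) + 1) / 2 := by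
  have h := two_mul_sin_half_mul_sum_cos θ (k + 1)
  rw [show ((k + 1 : ℕ) - 1 / 2 : ℝ) = k + 1 / 2 by push_cast; ring] at h
  rw [div_add_one hθ, ← h, mul_right_comm, mul_div_cancel_right₀ _ hθ,
    mul_div_cancel_left₀ _ two_ne_zero]

lemma four_mul_sum_cos_mul_cos_sub_one {θ : ℝ} (h1 : sin θ ≠ 0) (h2 : sin (θ / 2) ≠ 0) (k : ℕ) :
    4 * ∑ l ∈ range (k + 1), cos (l * θ) * (-1 + cos (l * θ)) =
      2 * k + 1 + sin ((2 * k + 1) * θ) / sin θ - 2 * (sin ((k + 1 / 2) * θ) / sin (θ / 2)) := by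
  have double : ∀ l : ℕ, 4 * (cos (l * θ) * (-1 + cos (l * θ))) =
      2 + 2 * cos (l * (2 * θ)) - 4 * cos (l * θ) := fun l => by
    rw [show (l : ℝ) * (2 * θ) = 2 * (l * θ) by ring, cos_two_mul]
    ring
  have s2 := sum_cos_eq (θ := 2 * θ) (by rwa [mul_div_cancel_left₀ θ two_ne_zero]) k
  rw [mul_div_cancel_left₀ θ two_ne_zero,
    show ((k : ℝ) + 1 / 2) * (2 * θ) = (2 * k + 1) * θ by ring] at s2
  rw [mul_sum, sum_congr rfl fun l _ => double l, sum_sub_distrib, sum_add_distrib, ← mul_sum,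
    ← mul_sum, s2, sum_cos_eq h2, sum_const, card_range, nsmul_eq_mul]
  push_cast
  ring

/-! ### Cosines on the regular polygon -/

/-- The cosine of `a` steps of the regular `n`-gon, `cos (2πa/n)`; integer arguments make the
reflection and addition formulas free of truncated subtraction. -/
noncomputable def gridCos (n : ℕ) (a : ℤ) : ℝ := cos (2 * π * a / n)

lemma gridCos_zero (n : ℕ) : gridCos n 0 = 1 := by simp [gridCos]

lemma pos_of_gridCos_neg {n k : ℕ} (h : gridCos n k < 0) : 0 < k := by
  refine Nat.pos_of_ne_zero ?_
  rintro rfl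
  rw [Nat.cast_zero, gridCos_zero] at h
  exact h.not_gt one_pos

lemma gridCos_le_one (n : ℕ) (a : ℤ) : gridCos n a ≤ 1 := cos_le_one _

lemma gridCos_eq_cos_mul (n l : ℕ) : gridCos n l = cos (l * (2 * π / n)) := by
  rw [gridCos, Int.cast_natCast]
  ring_nf

lemma gridCos_mul_mul {m : ℕ} (hm : m ≠ 0) (n : ℕ) (a : ℤ) :
    gridCos (m * n) (m * a) = gridCos n a := by
  have hm' : (m : ℝ) ≠ 0 := Nat.cast_ne_zero.2 hm
  simp only [gridCos]
  push_cast
  rw [mul_left_comm, mul_div_mul_left _ _ hm']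

lemma gridCos_mul_gridCos (n : ℕ) (a b : ℤ) :
    gridCos n a * gridCos n b = (gridCos n (a + b) + gridCos n (a - b)) / 2 := by
  have h := two_mul_cos_mul_cos (2 * π * a / n) (2 * π * b / n)
  simp only [gridCos]
  push_cast
  rw [mul_add, mul_sub, add_div (2 * π * a), sub_div, add_comm (cos _), ← h]
  ring

lemma gridCos_neg (n : ℕ) (a : ℤ) : gridCos n (-a) = gridCos n a := by
  simp [gridCos, neg_div]

lemma gridCos_add_mul (n : ℕ) (a t : ℤ) : gridCos n (a + t * n) = gridCos n a := by
  rcases eq_or_ne n 0 with rfl | hn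
  · simp
  · have angle : 2 * π * ((a + t * n : ℤ) : ℝ) / n = 2 * π * a / n + t * (2 * π) := by
      push_cast
      field_simp
    rw [gridCos, angle, cos_add_int_mul_two_pi, gridCos]

lemma gridCos_mul_sub (n : ℕ) (t a : ℤ) : gridCos n (t * n - a) = gridCos n a := by
  rw [← gridCos_neg n a, ← gridCos_add_mul n (-a) t, neg_add_eq_sub]

lemma gridCos_periodic (n : ℕ) : Function.Periodic (fun l : ℕ => gridCos n l) n := fun l => by
  simpa using gridCos_add_mul n l 1

lemma gridCos_eq_one_iff {n : ℕ} (hn : n ≠ 0) (a : ℤ) : gridCos n a = 1 ↔ (n : ℤ) ∣ a := by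
  rw [gridCos, cos_eq_one_iff]
  refine exists_congr fun t => ?_
  rw [eq_div_iff (Nat.cast_ne_zero.2 hn), eq_comm,
    show (t : ℝ) * (2 * π) * n = 2 * π * (n * t) by ring, mul_right_inj' two_pi_pos.ne']
  norm_cast

lemma sum_gridCos_mul_eq_zero {N : ℕ} {a : ℤ} (ha : ¬ (N : ℤ) ∣ a) :
    ∑ l ∈ range N, gridCos N (a * l) = 0 := by
  rcases eq_or_ne N 0 with rfl | hN
  · simp
  set θ : ℝ := 2 * π * a / N with hθ
  have sin_ne : sin (θ / 2) ≠ 0 := fun h => ha <| (gridCos_eq_one_iff hN a).1 <| by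
    rw [gridCos, ← hθ, ← mul_div_cancel₀ θ two_ne_zero, cos_two_mul, cos_sq', h]
    norm_num
  have last : sin ((N - 1 / 2) * θ) = -sin (θ / 2) := by
    rw [show (N - 1 / 2) * θ = a * (2 * π) - θ / 2 by rw [hθ]; field_simp,
      sin_int_mul_two_pi_sub]
  have h := two_mul_sin_half_mul_sum_cos θ N
  rw [last, neg_add_cancel, mul_eq_zero] at h
  have sum_eq_zero := h.resolve_left (mul_ne_zero two_ne_zero sin_ne)
  rw [← sum_eq_zero]
  refine sum_congr rfl fun l _ => ?_
  rw [gridCos, hθ]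
  push_cast
  ring_nf

lemma gridCos_strictAntiOn (n : ℕ) :
    StrictAntiOn (gridCos n) {a | 0 ≤ a ∧ 2 * a ≤ n} := by
  intro a ha b hb hab
  have hn : 0 < n := by have := ha.1; have := hb.2; omega
  have mem : ∀ c : ℤ, 0 ≤ c ∧ 2 * c ≤ n → 2 * π * c / n ∈ Set.Icc 0 π := fun c hc => by
    have h0 : (0 : ℝ) ≤ c := by exact_mod_cast hc.1
    have h1 : (2 * c : ℝ) ≤ n := by exact_mod_cast hc.2
    refine ⟨by positivity, ?_⟩
    rw [div_le_iff₀ (by positivity)]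
    nlinarith [pi_pos]
  refine strictAntiOn_cos (mem a ha) (mem b hb) ?_
  gcongr

section Threshold

variable {n : ℕ} {j k : ℤ}

lemma gridCos_min_sub (n : ℕ) (j : ℤ) : gridCos n (min j (n - j)) = gridCos n j := by
  rcases min_choice j (n - j) with h | h <;> rw [h]
  simpa using gridCos_mul_sub n 1 j

lemma gridCos_lt_gridCos_iff (hk : 0 ≤ k) (hkn : 2 * k ≤ n) (hj : 0 ≤ j) (hjn : j ≤ n) :
    gridCos n k < gridCos n j ↔ j < k ∨ n - k < j := by
  rw [← gridCos_min_sub n j, (gridCos_strictAntiOn n).lt_iff_gt ⟨hk, hkn⟩ ⟨by omega, by omega⟩]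
  omega

lemma gridCos_eq_gridCos_iff (hk : 0 ≤ k) (hkn : 2 * k ≤ n) (hj : 0 ≤ j) (hjn : j ≤ n) :
    gridCos n k = gridCos n j ↔ j = k ∨ j = n - k := by
  rw [← gridCos_min_sub n j, (gridCos_strictAntiOn n).injOn.eq_iff ⟨hk, hkn⟩ ⟨by omega, by omega⟩]
  omega

end Threshold

section Residues

variable {n k : ℕ}

lemma sum_filter_gridCos_lt (hk : 0 < k) (hkn : 2 * k < n) (φ : ℝ → ℝ) :
    ∑ l ∈ range n with gridCos n k < gridCos n (l : ℕ), φ (gridCos n (l : ℕ)) =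
      φ 1 + 2 * ∑ l ∈ Icc 1 (k - 1), φ (gridCos n (l : ℕ)) := by
  have residues : {l ∈ range n | gridCos n k < gridCos n (l : ℕ)} =
      range k ∪ Ico (n + 1 - k) (n + 1 - 1) := by
    ext l
    simp only [mem_filter, mem_range, mem_union, mem_Ico]
    by_cases hl : l < n
    · rw [gridCos_lt_gridCos_iff (by omega) (by omega) (by omega) (by omega)]
      omega
    · omega
  have disj : Disjoint (range k) (Ico (n + 1 - k) (n + 1 - 1)) := by
    rw [disjoint_left]
    intro l
    simp only [mem_range, mem_Ico]
    omega
  have reflect : ∑ l ∈ Ico (n + 1 - k) (n + 1 - 1), φ (gridCos n (l : ℕ)) =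
      ∑ l ∈ Ico 1 k, φ (gridCos n (l : ℕ)) := by
    rw [← sum_Ico_reflect _ _ (by omega)]
    refine sum_congr rfl fun l hl => ?_
    rw [Nat.cast_sub (by rw [mem_Ico] at hl; omega)]
    simpa using congrArg φ (gridCos_mul_sub n 1 l)
  rw [residues, sum_union disj, reflect, sum_Icc_one_pred_eq_sum_range_sub hk,
    sum_range_eq_add_Ico _ hk, Nat.cast_zero, gridCos_zero]
  ring

lemma sum_filter_gridCos_eq (hk : 0 < k) (hkn : 2 * k < n) (φ : ℝ → ℝ) :
    ∑ l ∈ range n with gridCos n k = gridCos n (l : ℕ), φ (gridCos n (l : ℕ)) =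
      2 * φ (gridCos n k) := by
  have residues : {l ∈ range n | gridCos n k = gridCos n (l : ℕ)} = {k, n - k} := by
    ext l
    simp only [mem_filter, mem_range, mem_insert, mem_singleton]
    by_cases hl : l < n
    · rw [gridCos_eq_gridCos_iff (by omega) (by omega) (by omega) (by omega)]
      omega
    · omega
  have same : ∀ l ∈ {l ∈ range n | gridCos n k = gridCos n (l : ℕ)},
      φ (gridCos n (l : ℕ)) = φ (gridCos n k) := fun l hl => by rw [(mem_filter.1 hl).2]
  rw [sum_congr rfl same, sum_const, residues, card_pair (by omega), nsmul_eq_mul, Nat.cast_two]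

end Residues
/-! ### The critical index -/

/-- The summand of the sums `s_k`: the weight of the link offset `a` in the eigenvalue with index
`q = p`, where `N = p * n`. -/
noncomputable def critWeight (n : ℕ) (a : ℤ) : ℝ := gridCos n a * (-1 + gridCos n a)

/-- The partial sums `s_k` of the paper, with the number of steps `n = Ñ` explicit. -/
noncomputable def critWeightSum (n k : ℕ) : ℝ := ∑ l ∈ Icc 1 k, critWeight n (l : ℕ)

/-- The value `α_Ñ` that the paper attaches to `k = k_c`, for an arbitrary index `k`. -/
noncomputable def critAlpha (n k : ℕ) : ℝ :=
  2 * (k : ℝ) - 1 - 2 * critWeightSum n (k - 1) / (critWeightSum n k - critWeightSum n (k - 1))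

/-- The properties of `k_c` on which the optimization depends: `k` lies in the first half of the
`n`-gon and the partial sums change sign at `k`. -/
structure IsCriticalIndex (n k : ℕ) : Prop where
  two_mul_lt : 2 * k < n
  sum_pred_neg : critWeightSum n (k - 1) < 0
  sum_nonneg : 0 ≤ critWeightSum n k

lemma critWeight_zero (n : ℕ) : critWeight n 0 = 0 := by simp [critWeight, gridCos_zero]

lemma critWeightSum_zero (n : ℕ) : critWeightSum n 0 = 0 := rfl

lemma critWeightSum_eq_sum_range (n k : ℕ) :
    critWeightSum n k = ∑ l ∈ range (k + 1), critWeight n (l : ℕ) := by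
  simpa [critWeight_zero, critWeightSum] using
    sum_Icc_one_pred_eq_sum_range_sub k.succ_pos fun l => critWeight n l

lemma critWeightSum_eq_pred_add {k : ℕ} (hk : 0 < k) (n : ℕ) :
    critWeightSum n k = critWeightSum n (k - 1) + critWeight n k := by
  obtain ⟨k, rfl⟩ := Nat.exists_eq_succ_of_ne_zero hk.ne'
  exact sum_Icc_succ_top (by omega) _

lemma two_pi_div_mem_Ioo {n : ℕ} (hn : 3 ≤ n) : 2 * π / n ∈ Set.Ioo 0 π := by
  have hn' : (3 : ℝ) ≤ n := by exact_mod_cast hn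
  have := pi_pos
  refine ⟨by positivity, ?_⟩
  rw [div_lt_iff₀ (by positivity)]
  nlinarith

lemma four_mul_critWeightSum {n : ℕ} (hn : 3 ≤ n) (k : ℕ) :
    4 * critWeightSum n k = 2 * k + 1 + sin ((2 * k + 1) * (2 * π / n)) / sin (2 * π / n) -
      2 * (sin ((k + 1 / 2) * (2 * π / n)) / sin (2 * π / n / 2)) := by
  obtain ⟨h0, hπ⟩ := two_pi_div_mem_Ioo hn
  rw [critWeightSum_eq_sum_range, ← four_mul_sum_cos_mul_cos_sub_one
    (sin_pos_of_pos_of_lt_pi h0 hπ).ne' (sin_pos_of_pos_of_lt_pi (by linarith) (by linarith)).ne']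
  simp only [critWeight, gridCos_eq_cos_mul]

lemma critWeightSum_half_nonneg {n : ℕ} (hn : 3 ≤ n) : 0 ≤ critWeightSum n ((n - 1) / 2) := by
  obtain ⟨h0, hπ⟩ := two_pi_div_mem_Ioo hn
  have closed := four_mul_critWeightSum hn ((n - 1) / 2)
  have angle : n * (2 * π / n) = 2 * π := mul_div_cancel₀ _ (Nat.cast_ne_zero.2 (by omega))
  set K := (n - 1) / 2
  set h := 2 * π / n
  obtain hK | hK : n = 2 * K + 1 ∨ n = 2 * K + 2 := by omega
  · have hn' : (n : ℝ) = 2 * K + 1 := by exact_mod_cast hK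
    rw [show (2 * K + 1 : ℝ) * h = 2 * π by rw [← hn', angle],
      show (K + 1 / 2 : ℝ) * h = π by linear_combination angle / 2 - h / 2 * hn',
      sin_two_pi, sin_pi, zero_div, zero_div] at closed
    have : (0 : ℝ) ≤ K := K.cast_nonneg
    linarith
  · have hn' : (n : ℝ) = 2 * K + 2 := by exact_mod_cast hK
    rw [show (2 * K + 1 : ℝ) * h = 2 * π - h by linear_combination angle - h * hn',
      show (K + 1 / 2 : ℝ) * h = π - h / 2 by linear_combination angle / 2 - h / 2 * hn',
      sin_two_pi_sub, sin_pi_sub, neg_div, div_self (sin_pos_of_pos_of_lt_pi h0 hπ).ne',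
      div_self (sin_pos_of_pos_of_lt_pi (by linarith) (by linarith)).ne'] at closed
    have : (1 : ℝ) ≤ K := by exact_mod_cast (by omega : 1 ≤ K)
    linarith

lemma critWeight_one_neg {n : ℕ} (hn : 5 ≤ n) : critWeight n 1 < 0 := by
  have hn' : (5 : ℝ) ≤ n := by exact_mod_cast hn
  have cos_pos : 0 < gridCos n 1 := by
    refine cos_pos_of_mem_Ioo ⟨(neg_neg_of_pos pi_div_two_pos).trans (by positivity), ?_⟩
    rw [Int.cast_one, mul_one, div_lt_iff₀ (by positivity)]
    nlinarith [pi_pos]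
  have cos_lt_one : gridCos n 1 < 1 := by
    simpa [gridCos_zero] using gridCos_strictAntiOn n (a := 0) (b := 1) (by simp) (by simp; omega)
      one_pos
  exact mul_neg_of_pos_of_neg cos_pos (by linarith)

lemma isCriticalIndex_of_isLeast {n k : ℕ} (hn : 5 ≤ n)
    (hk : IsLeast {k | k ∈ Icc 1 (n - 1) ∧ 0 ≤ critWeightSum n k} k) : IsCriticalIndex n k := by
  obtain ⟨⟨hk_mem, hk_nonneg⟩, hk_least⟩ := hk
  rw [mem_Icc] at hk_mem
  have half : k ≤ (n - 1) / 2 :=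
    hk_least ⟨mem_Icc.2 (by omega), critWeightSum_half_nonneg (by omega)⟩
  have k_ne_one : k ≠ 1 := by
    rintro rfl
    rw [critWeightSum_eq_pred_add one_pos, tsub_self, critWeightSum_zero, zero_add] at hk_nonneg
    exact hk_nonneg.not_gt (critWeight_one_neg hn)
  refine ⟨by omega, not_le.1 fun h => ?_, hk_nonneg⟩
  have := hk_least ⟨mem_Icc.2 (by omega), h⟩
  omega

namespace IsCriticalIndex

variable {n k : ℕ}

lemma two_le (hk : IsCriticalIndex n k) : 2 ≤ k := by
  by_contra! h
  have hneg := hk.sum_pred_neg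
  rw [show k - 1 = 0 by omega, critWeightSum_zero] at hneg
  exact lt_irrefl 0 hneg

lemma critWeight_eq_sub (hk : IsCriticalIndex n k) :
    critWeight n k = critWeightSum n k - critWeightSum n (k - 1) := by
  rw [critWeightSum_eq_pred_add (by have := hk.two_le; omega), add_sub_cancel_left]

lemma critWeight_pos (hk : IsCriticalIndex n k) : 0 < critWeight n k := by
  linarith [hk.critWeight_eq_sub, hk.sum_pred_neg, hk.sum_nonneg]

lemma gridCos_neg (hk : IsCriticalIndex n k) : gridCos n k < 0 := by
  have hpos := hk.critWeight_pos
  have hle := gridCos_le_one n k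
  by_contra! h
  exact hpos.not_ge (mul_nonpos_of_nonneg_of_nonpos h (by linarith))

lemma critWeight_le_critWeight_iff (hk : IsCriticalIndex n k) (a : ℤ) :
    critWeight n k ≤ critWeight n a ↔ gridCos n a ≤ gridCos n k := by
  have factor : critWeight n a - critWeight n k =
      (gridCos n k - gridCos n a) * (1 - gridCos n k - gridCos n a) := by
    simp only [critWeight]
    ring
  rw [← sub_nonneg, factor, mul_nonneg_iff_of_pos_right, sub_nonneg]
  linarith [hk.gridCos_neg, gridCos_le_one n a]

end IsCriticalIndex

/-- The fraction `θ ∈ (0, 1]` of the `2m` offsets with residue `± k` modulo `n` that can be linked,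
together with all offsets of larger cosine, before the eigenvalue with index `m` vanishes. -/
noncomputable def boundaryFraction (n k : ℕ) : ℝ := -critWeightSum n (k - 1) / critWeight n k

namespace IsCriticalIndex

variable {n k : ℕ}

lemma boundaryFraction_pos (hk : IsCriticalIndex n k) : 0 < boundaryFraction n k :=
  div_pos (neg_pos.2 hk.sum_pred_neg) hk.critWeight_pos

lemma boundaryFraction_le_one (hk : IsCriticalIndex n k) : boundaryFraction n k ≤ 1 := by
  rw [boundaryFraction, div_le_one hk.critWeight_pos]
  linarith [hk.critWeight_eq_sub, hk.sum_nonneg]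

lemma boundaryFraction_mul_critWeight (hk : IsCriticalIndex n k) :
    boundaryFraction n k * critWeight n k = -critWeightSum n (k - 1) :=
  div_mul_cancel₀ _ hk.critWeight_pos.ne'

lemma critAlpha_eq (hk : IsCriticalIndex n k) :
    critAlpha n k = 2 * k - 1 + 2 * boundaryFraction n k := by
  rw [critAlpha, boundaryFraction, hk.critWeight_eq_sub]
  ring

end IsCriticalIndex

/-! ### Eigenvalues of feasible vectors -/

/-- The sum whose negativity feasibility demands for the index `q`; the offset `l = 0`, which the
statement leaves out, contributes `0`. -/
noncomputable def twistedEigenvalue (N p : ℕ) (x : ℕ → ℝ) (q : ℕ) : ℝ :=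
  ∑ l ∈ range N, x l * gridCos N (p * l) * (-1 + gridCos N (q * l))

lemma feasible_iff {N p : ℕ} {x : ℕ → ℝ} (hN : 0 < N) :
    feasible N p x ↔
      (∀ l ∈ Icc 1 (N - 1), x l = 0 ∨ x l = 1) ∧ (∀ l ∈ Icc 1 (N - 1), x l = x (N - l)) ∧
        ∀ q ∈ Icc 1 (N - 1), twistedEigenvalue N p x q < 0 := by
  have sum_eq (q : ℕ) : ∑ l ∈ Icc 1 (N - 1), x l * cos (2 * π * p * l / N) *
      (-1 + cos (2 * π * q * l / N)) = twistedEigenvalue N p x q := by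
    rw [sum_Icc_one_pred_eq_sum_range_sub hN]
    simp [twistedEigenvalue, gridCos, mul_assoc]
  simp only [feasible, sum_eq]

lemma twistedEigenvalue_mul {m : ℕ} (hm : m ≠ 0) (n : ℕ) (x : ℕ → ℝ) (q : ℕ) :
    twistedEigenvalue (m * n) m x q =
      ∑ l ∈ range (m * n), x l * gridCos n (l : ℕ) * (-1 + gridCos (m * n) (q * l)) := by
  simp only [twistedEigenvalue, gridCos_mul_mul hm]

lemma twistedEigenvalue_self {m : ℕ} (hm : m ≠ 0) (n : ℕ) (x : ℕ → ℝ) :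
    twistedEigenvalue (m * n) m x m = ∑ l ∈ range (m * n), x l * critWeight n (l : ℕ) := by
  simp only [twistedEigenvalue_mul hm, gridCos_mul_mul hm, critWeight, mul_assoc]

lemma twistedEigenvalue_sub {N p q : ℕ} (hq : q ≤ N) (x : ℕ → ℝ) :
    twistedEigenvalue N p x (N - q) = twistedEigenvalue N p x q := by
  refine sum_congr rfl fun l _ => ?_
  rw [Nat.cast_sub hq, sub_mul, mul_comm (N : ℤ), gridCos_mul_sub]

lemma sum_gridCos_mul_sub_one_eq_zero {N : ℕ} {p q : ℤ} (hp : ¬ (N : ℤ) ∣ p)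
    (hadd : ¬ (N : ℤ) ∣ p + q) (hsub : ¬ (N : ℤ) ∣ p - q) :
    ∑ l ∈ range N, gridCos N (p * l) * (-1 + gridCos N (q * l)) = 0 := by
  have expand : ∀ l : ℕ, gridCos N (p * l) * (-1 + gridCos N (q * l)) =
      -gridCos N (p * l) + (gridCos N ((p + q) * l) + gridCos N ((p - q) * l)) / 2 := fun l => by
    rw [mul_add, gridCos_mul_gridCos, ← add_mul, ← sub_mul]
    ring
  simp only [expand, sum_add_distrib, sum_neg_distrib, ← sum_div, sum_gridCos_mul_eq_zero hp,
    sum_gridCos_mul_eq_zero hadd, sum_gridCos_mul_eq_zero hsub]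
  norm_num

/-! ### The upper bound -/

/-- The nonnegative multipliers of the constraints `x l ≤ 1` in the linear programming dual,
whose multiplier of the eigenvalue constraint is `1 / critWeight n k`. -/
noncomputable def slack (n k : ℕ) (l : ℕ) : ℝ := max (1 - critWeight n l / critWeight n k) 0

lemma slack_zero (n k : ℕ) : slack n k 0 = 1 := by simp [slack, critWeight_zero]

lemma le_slack_add (n k l : ℕ) {t : ℝ} (ht : t = 0 ∨ t = 1) :
    t ≤ slack n k l + t * critWeight n l / critWeight n k := by
  rcases ht with rfl | rfl
  · simp [slack]
  · rw [one_mul, ← sub_le_iff_le_add]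
    exact le_max_left _ _

lemma slack_periodic (n k : ℕ) : Function.Periodic (slack n k) n :=
  (gridCos_periodic n).comp fun c => max (1 - c * (-1 + c) / critWeight n k) 0

namespace IsCriticalIndex

variable {n k : ℕ}

lemma slack_eq (hk : IsCriticalIndex n k) (l : ℕ) :
    slack n k l = if gridCos n k < gridCos n l then 1 - critWeight n l / critWeight n k else 0 := by
  split_ifs with h
  · refine max_eq_left ?_
    rw [sub_nonneg, div_le_one hk.critWeight_pos]
    exact (not_le.1 <| (hk.critWeight_le_critWeight_iff l).not.2 h.not_ge).le
  · refine max_eq_right ?_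
    rw [sub_nonpos, one_le_div hk.critWeight_pos, hk.critWeight_le_critWeight_iff]
    exact not_lt.1 h

lemma sum_slack (hk : IsCriticalIndex n k) : ∑ l ∈ range n, slack n k l = critAlpha n k := by
  have pos : 0 < k := zero_lt_two.trans_le hk.two_le
  have sum_gt := sum_filter_gridCos_lt pos hk.two_mul_lt fun c =>
    1 - c * (-1 + c) / critWeight n k
  simp only [slack_eq hk, ← sum_filter]
  refine sum_gt.trans ?_
  rw [sum_sub_distrib, ← sum_div]
  change 1 - 1 * (-1 + 1) / critWeight n k + 2 * (_ - critWeightSum n (k - 1) / _) = _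
  rw [hk.critAlpha_eq, boundaryFraction, sum_const, Nat.card_Icc, nsmul_one, Nat.add_sub_cancel,
    Nat.cast_pred pos]
  ring

theorem sum_le_of_feasible (hk : IsCriticalIndex n k) {m : ℕ} (hm : 0 < m) {x : ℕ → ℝ}
    (hx : feasible (m * n) m x) :
    ∑ l ∈ Icc 1 (m * n - 1), x l ≤ m * critAlpha n k - 1 := by
  have hn : 2 < n := by have := hk.two_mul_lt; have := hk.two_le; omega
  have hmn : m < m * n := lt_mul_of_one_lt_right hm (by omega)
  obtain ⟨hx01, -, hx_neg⟩ := (feasible_iff (by omega)).1 hx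
  have critical : ∑ l ∈ range (m * n), x l * critWeight n l < 0 := by
    rw [← twistedEigenvalue_self hm.ne']
    exact hx_neg m (mem_Icc.2 (by omega))
  calc ∑ l ∈ Icc 1 (m * n - 1), x l
      ≤ ∑ l ∈ Icc 1 (m * n - 1), (slack n k l + x l * critWeight n l / critWeight n k) :=
        sum_le_sum fun l hl => le_slack_add n k l (hx01 l hl)
    _ = m * critAlpha n k - 1 + (∑ l ∈ range (m * n), x l * critWeight n l) / critWeight n k := by
        rw [sum_Icc_one_pred_eq_sum_range_sub (by omega), sum_add_distrib, ← sum_div,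
          sum_range_mul_of_periodic (slack_periodic n k), hk.sum_slack, slack_zero,
          nsmul_eq_mul, Nat.cast_zero, critWeight_zero]
        ring
    _ ≤ m * critAlpha n k - 1 :=
        add_le_of_nonpos_right (div_nonpos_of_nonpos_of_nonneg critical.le hk.critWeight_pos.le)

end IsCriticalIndex

/-! ### Feasible vectors close to the bound -/

/-- The vector, for the index pair `(m * n, m)`, that links all offsets whose cosine exceeds
`gridCos n k`, and those with cosine equal to `gridCos n k` that are more than `d` turns of the
`n`-gon away from both ends. Its entry at `l = 0` does not count towards feasibility. -/
noncomputable def thresholdVector (m n k d : ℕ) (l : ℕ) : ℝ :=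
  if gridCos n k < gridCos n l ∨
    gridCos n k = gridCos n l ∧ d * n < l ∧ l + d * n < m * n then 1 else 0

lemma thresholdVector_eq_zero_or_one (m n k d l : ℕ) :
    thresholdVector m n k d l = 0 ∨ thresholdVector m n k d l = 1 := by
  unfold thresholdVector
  split_ifs
  exacts [Or.inr rfl, Or.inl rfl]

lemma thresholdVector_sub {m n l : ℕ} (hl : l ≤ m * n) (k d : ℕ) :
    thresholdVector m n k d (m * n - l) = thresholdVector m n k d l := by
  have reflect : gridCos n (m * n - l : ℕ) = gridCos n l := by
    rw [Nat.cast_sub hl]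
    push_cast
    exact gridCos_mul_sub n m l
  have window : (d * n < m * n - l ∧ m * n - l + d * n < m * n) ↔
      (d * n < l ∧ l + d * n < m * n) := by omega
  simp only [thresholdVector, reflect, window]

lemma sum_thresholdVector_mul {m n k d : ℕ} (hk : 0 < k) (hkn : 2 * k < n) (hd : 2 * d ≤ m)
    (φ : ℝ → ℝ) :
    ∑ l ∈ range (m * n), thresholdVector m n k d l * φ (gridCos n l) =
      m * (φ 1 + 2 * ∑ l ∈ Icc 1 (k - 1), φ (gridCos n l)) +
        (m - 2 * d) * (2 * φ (gridCos n k)) := by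
  set above : ℕ → ℝ := fun l => if gridCos n k < gridCos n l then φ (gridCos n l) else 0
    with above_def
  set level : ℕ → ℝ := fun l => if gridCos n k = gridCos n l then φ (gridCos n l) else 0
    with level_def
  have split (l : ℕ) : thresholdVector m n k d l * φ (gridCos n l) =
      above l + if d * n < l ∧ l + d * n < m * n then level l else 0 := by
    simp only [thresholdVector, above_def, level_def]
    split_ifs <;> grind
  have above_periodic : Function.Periodic above n :=
    (gridCos_periodic n).comp fun c => if gridCos n k < c then φ c else 0
  have level_periodic : Function.Periodic level n :=
    (gridCos_periodic n).comp fun c => if gridCos n k = c then φ c else 0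
  have level_zero : level 0 = 0 := by
    refine if_neg fun h => ?_
    rw [Nat.cast_zero, gridCos_zero, gridCos_eq_one_iff (by omega), Int.natCast_dvd_natCast] at h
    exact absurd (Nat.le_of_dvd hk h) (by omega)
  rw [sum_congr rfl fun l _ => split l, sum_add_distrib, ← sum_filter (fun l => d * n < l ∧ _),
    sum_range_mul_of_periodic above_periodic, sum_window_of_periodic level_periodic level_zero hd,
    ← sum_filter, ← sum_filter, sum_filter_gridCos_lt hk hkn, sum_filter_gridCos_eq hk hkn,
    nsmul_eq_mul, nsmul_eq_mul, Nat.cast_sub hd, Nat.cast_mul, Nat.cast_two]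

-- If both indices had cosine one, `N` would divide `q * (k + 1) - q * k = q`.
lemma exists_gridCos_mul_lt_one {N q : ℕ} (hN : N ≠ 0) (hq : ¬ N ∣ q) (k : ℕ) :
    ∃ l ∈ ({k, k + 1} : Finset ℕ), gridCos N (q * l) < 1 := by
  by_contra! h
  have dvd (l : ℕ) (hl : l ∈ ({k, k + 1} : Finset ℕ)) : N ∣ q * l := by
    have := (gridCos_eq_one_iff hN _).1 ((gridCos_le_one N _).antisymm (h l hl))
    exact_mod_cast this
  exact hq <| (Nat.dvd_add_right (dvd k (by simp))).1 <| by
    simpa [mul_add] using dvd (k + 1) (by simp)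

section Feasibility

variable {m n k d q : ℕ}

lemma one_sub_thresholdVector_mul_gridCos_nonpos (hk : gridCos n k < 0) (l : ℕ) :
    (1 - thresholdVector m n k d l) * gridCos n l ≤ 0 := by
  unfold thresholdVector
  split_ifs with h
  · simp
  · rw [sub_zero, one_mul]
    exact (not_lt.1 (not_or.1 h).1).trans hk.le

lemma thresholdVector_eq_zero {l : ℕ} (hd : 0 < d) (hl : l < n)
    (hle : gridCos n l ≤ gridCos n k) : thresholdVector m n k d l = 0 := by
  have : n ≤ d * n := Nat.le_mul_of_pos_left n hd
  refine if_neg ?_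
  rintro (h | h)
  · exact hle.not_gt h
  · omega

lemma sum_gridCos_mul_index_eq_zero (hn : 1 < n) (hm : 0 < m) (hqN : q < m * n) (hqm : q ≠ m)
    (hqm' : q ≠ m * n - m) :
    ∑ l ∈ range (m * n), gridCos n l * (-1 + gridCos (m * n) (q * l)) = 0 := by
  have hmn : m < m * n := lt_mul_of_one_lt_right hm hn
  have not_dvd {a : ℤ} (ha : a ≠ 0) (hlt : |a| < (m * n : ℕ)) : ¬ ((m * n : ℕ) : ℤ) ∣ a :=
    fun h => ha (Int.eq_zero_of_abs_lt_dvd h hlt)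
  have h := sum_gridCos_mul_sub_one_eq_zero (N := m * n) (p := m) (q := q)
    (not_dvd (by omega) (abs_lt.2 (by omega)))
    (fun h => not_dvd (a := m + q - (m * n : ℕ)) (by omega) (abs_lt.2 (by omega))
      (dvd_sub_self_right.2 h))
    (not_dvd (by omega) (abs_lt.2 (by omega)))
  simpa only [gridCos_mul_mul hm.ne'] using h

lemma one_sub_thresholdVector_mul_gridCos_neg (hkn : 2 * k < n) (hk : gridCos n k < 0)
    (hd : 0 < d) (m : ℕ) {l : ℕ} (hl : l ∈ ({k, k + 1} : Finset ℕ)) :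
    (1 - thresholdVector m n k d l) * gridCos n l < 0 := by
  have k_pos := pos_of_gridCos_neg hk
  have hl_mem : k ≤ l ∧ l ≤ n - k := by
    rw [mem_insert, mem_singleton] at hl
    omega
  have hle : gridCos n l ≤ gridCos n k := by
    rw [← not_lt, gridCos_lt_gridCos_iff] <;> omega
  rw [thresholdVector_eq_zero hd (by omega) hle, sub_zero, one_mul]
  exact hle.trans_lt hk

lemma twistedEigenvalue_thresholdVector_neg (hkn : 2 * k < n) (hk : gridCos n k < 0)
    (hd : 0 < d) (hm : 0 < m) (hq : 0 < q) (hqN : q < m * n) (hqm : q ≠ m)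
    (hqm' : q ≠ m * n - m) :
    twistedEigenvalue (m * n) m (thresholdVector m n k d) q < 0 := by
  have k_pos := pos_of_gridCos_neg hk
  have full_eq_zero := sum_gridCos_mul_index_eq_zero (n := n) (by omega) hm hqN hqm hqm'
  have missing_nonneg (l : ℕ) : 0 ≤ (1 - thresholdVector m n k d l) * gridCos n l *
      (-1 + gridCos (m * n) (q * l)) :=
    mul_nonneg_of_nonpos_of_nonpos (one_sub_thresholdVector_mul_gridCos_nonpos hk l)
      (by linarith [gridCos_le_one (m * n) (q * l)])
  obtain ⟨l, hl, hlt⟩ :=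
    exists_gridCos_mul_lt_one (by omega) (Nat.not_dvd_of_pos_of_lt hq hqN) k
  have missing_pos : 0 < (1 - thresholdVector m n k d l) * gridCos n l *
      (-1 + gridCos (m * n) (q * l)) :=
    mul_pos_of_neg_of_neg (one_sub_thresholdVector_mul_gridCos_neg hkn hk hd m hl) (by linarith)
  have sum_pos : 0 < ∑ l ∈ range (m * n), (1 - thresholdVector m n k d l) * gridCos n l *
      (-1 + gridCos (m * n) (q * l)) := by
    refine sum_pos' (fun l _ => missing_nonneg l) ⟨l, mem_range.2 ?_, missing_pos⟩
    have : n ≤ m * n := Nat.le_mul_of_pos_left n hm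
    rw [mem_insert, mem_singleton] at hl
    omega
  have complement : ∑ l ∈ range (m * n), (1 - thresholdVector m n k d l) * gridCos n l *
      (-1 + gridCos (m * n) (q * l)) =
        -twistedEigenvalue (m * n) m (thresholdVector m n k d) q := by
    rw [eq_neg_iff_add_eq_zero, twistedEigenvalue_mul hm.ne', ← sum_add_distrib]
    exact (sum_congr rfl fun l _ => by ring).trans full_eq_zero
  rwa [complement, neg_pos] at sum_pos

end Feasibility

namespace IsCriticalIndex

variable {n k : ℕ}

lemma feasible_thresholdVector (hk : IsCriticalIndex n k) {m d : ℕ} (hd : 0 < d)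
    (hdm : 2 * d ≤ m) (hθ : (1 - boundaryFraction n k) * m < 2 * d) :
    feasible (m * n) m (thresholdVector m n k d) := by
  have hn : 0 < n := by have := hk.two_mul_lt; omega
  have hmn : m ≤ m * n := Nat.le_mul_of_pos_right m hn
  have critical : twistedEigenvalue (m * n) m (thresholdVector m n k d) m < 0 := by
    rw [twistedEigenvalue_self (by omega)]
    refine (sum_thresholdVector_mul (by have := hk.two_le; omega) hk.two_mul_lt hdm
      fun c => c * (-1 + c)).trans_lt ?_
    change m * (1 * (-1 + 1) + 2 * critWeightSum n (k - 1)) + (m - 2 * d) *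
      (2 * critWeight n k) < 0
    have excess : 0 < (2 * d - (1 - boundaryFraction n k) * m) * critWeight n k :=
      mul_pos (sub_pos.2 hθ) hk.critWeight_pos
    linear_combination 2 * excess + 2 * m * hk.boundaryFraction_mul_critWeight
  rw [feasible_iff (by omega)]
  refine ⟨fun l _ => thresholdVector_eq_zero_or_one m n k d l, fun l hl => ?_, fun q hq => ?_⟩
  · rw [mem_Icc] at hl
    exact (thresholdVector_sub (by omega) k d).symm
  · rw [mem_Icc] at hq
    by_cases hqm : q = m
    · rwa [hqm]
    by_cases hqm' : q = m * n - m
    · rwa [hqm', twistedEigenvalue_sub hmn]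
    exact twistedEigenvalue_thresholdVector_neg hk.two_mul_lt hk.gridCos_neg hd
      (by omega) (by omega) (by omega) hqm hqm'

lemma sum_thresholdVector (hk : IsCriticalIndex n k) {m d : ℕ} (hm : 0 < m) (hdm : 2 * d ≤ m) :
    ∑ l ∈ Icc 1 (m * n - 1), thresholdVector m n k d l =
      m * (2 * k - 1) + 2 * (m - 2 * d) - 1 := by
  have pos : 0 < k := by have := hk.two_le; omega
  have hn : 0 < n := by have := hk.two_mul_lt; omega
  have hmn : m ≤ m * n := Nat.le_mul_of_pos_right m hn
  have entry_zero : thresholdVector m n k d 0 = 1 := by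
    refine if_pos (Or.inl ?_)
    rw [Nat.cast_zero, gridCos_zero]
    exact hk.gridCos_neg.trans one_pos
  have total := sum_thresholdVector_mul pos hk.two_mul_lt hdm fun _ => 1
  simp only [mul_one, sum_const, Nat.card_Icc, Nat.add_sub_cancel, nsmul_one,
    Nat.cast_pred pos] at total
  rw [sum_Icc_one_pred_eq_sum_range_sub (by omega), entry_zero, total]
  ring

-- Rounding `(1 - θ) m / 2` up to `d` costs at most `4`, and leaving out `l = 0` costs `1`.
theorem exists_feasible_le_sum (hk : IsCriticalIndex n k) :
    ∀ᶠ m : ℕ in atTop, ∃ x, feasible (m * n) m x ∧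
      m * critAlpha n k - 5 ≤ ∑ l ∈ Icc 1 (m * n - 1), x l := by
  have large : ∀ᶠ m : ℕ in atTop, 2 ≤ boundaryFraction n k * m :=
    (tendsto_natCast_atTop_atTop.const_mul_atTop hk.boundaryFraction_pos).eventually_ge_atTop 2
  filter_upwards [large] with m hm
  have excluded_nonneg : 0 ≤ (1 - boundaryFraction n k) * m / 2 :=
    div_nonneg (mul_nonneg (sub_nonneg.2 hk.boundaryFraction_le_one) m.cast_nonneg) two_pos.le
  obtain ⟨d, hd⟩ : ∃ d, d = ⌊(1 - boundaryFraction n k) * m / 2⌋₊ + 1 := ⟨_, rfl⟩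
  have floor_le := Nat.floor_le excluded_nonneg
  have lt_floor := Nat.lt_floor_add_one ((1 - boundaryFraction n k) * m / 2)
  have hd_cast : (d : ℝ) = ⌊(1 - boundaryFraction n k) * m / 2⌋₊ + 1 := by exact_mod_cast hd
  have hdm : 2 * d ≤ m := by
    have : (2 * d : ℝ) ≤ m := by linarith
    exact_mod_cast this
  refine ⟨thresholdVector m n k d,
    hk.feasible_thresholdVector (by omega) hdm (by linarith), ?_⟩
  rw [hk.sum_thresholdVector (by omega) hdm, hk.critAlpha_eq]
  linarith

end IsCriticalIndex

/-! ### The continuum limit -/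

/-- The limit of `4h * critWeightSum n k` as `h = 2π / n → 0` with `(k + 1/2) h = y` fixed; the
equation for `K_c` says that it vanishes at `y = 2πK_c`. -/
noncomputable def limitWeightSum (y : ℝ) : ℝ := 2 * y + sin (2 * y) - 4 * sin y

lemma hasDerivAt_limitWeightSum (y : ℝ) :
    HasDerivAt limitWeightSum (4 * (cos y * (-1 + cos y))) y := by
  have double := (hasDerivAt_id' y).const_mul 2
  refine ((double.add double.sin).sub ((hasDerivAt_sin y).const_mul 4)).congr_deriv ?_
  rw [cos_two_mul]
  ring

lemma limitWeightSum_strictMonoOn : StrictMonoOn limitWeightSum (Set.Icc (π / 2) π) := by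
  refine strictMonoOn_of_hasDerivWithinAt_pos (convex_Icc _ _)
    (fun y _ => (hasDerivAt_limitWeightSum y).continuousAt.continuousWithinAt)
    (fun y _ => (hasDerivAt_limitWeightSum y).hasDerivWithinAt) fun y hy => ?_
  rw [interior_Icc] at hy
  have cos_neg : cos y < 0 := cos_neg_of_pi_div_two_lt_of_lt hy.1 (by linarith [hy.2, pi_pos])
  exact mul_pos four_pos (mul_pos_of_neg_of_neg cos_neg (by linarith))

lemma limitWeightSum_two_pi_div_three_neg : limitWeightSum (2 * π / 3) < 0 := by
  have sqrt_three_gt : 1.73 < √3 := lt_sqrt_of_sq_lt (by norm_num)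
  rw [limitWeightSum, show 2 * (2 * π / 3) = π / 3 + π by ring, sin_add_pi,
    show 2 * π / 3 = π - π / 3 by ring, sin_pi_sub, sin_pi_div_three]
  linarith [pi_lt_d2]

lemma two_pi_div_three_lt_of_limitWeightSum_eq_zero {u : ℝ} (hu : u ∈ Set.Icc (π / 2) π)
    (hroot : limitWeightSum u = 0) : 2 * π / 3 < u := by
  rw [← limitWeightSum_strictMonoOn.lt_iff_lt ⟨by linarith [pi_pos], by linarith [pi_pos]⟩ hu,
    hroot]
  exact limitWeightSum_two_pi_div_three_neg

lemma three_mul_sub_le_limitWeightSum_sub {u y : ℝ} (hu : 2 * π / 3 ≤ u) (huy : u ≤ y)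
    (hy : y ≤ π) : 3 * (y - u) ≤ limitWeightSum y - limitWeightSum u := by
  refine (convex_Icc (2 * π / 3) π).mul_sub_le_image_sub_of_le_deriv
    (fun z _ => (hasDerivAt_limitWeightSum z).continuousAt.continuousWithinAt)
    (fun z _ => (hasDerivAt_limitWeightSum z).differentiableAt.differentiableWithinAt)
    (fun z hz => ?_) u ⟨hu, huy.trans hy⟩ y ⟨hu.trans huy, hy⟩ huy
  rw [interior_Icc] at hz
  have cos_le : cos z ≤ -1 / 2 := by
    have cos_two_thirds : cos (2 * π / 3) = -1 / 2 := by
      rw [show 2 * π / 3 = π - π / 3 by ring, cos_pi_sub, cos_pi_div_three]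
      norm_num
    rw [← cos_two_thirds]
    exact cos_le_cos_of_nonneg_of_le_pi (by positivity) hz.2.le hz.1.le
  rw [(hasDerivAt_limitWeightSum z).deriv]
  nlinarith

lemma abs_div_sin_sub_one_le {x : ℝ} (h0 : 0 < x) (h2 : x ≤ 2) : |x / sin x - 1| ≤ x ^ 2 / 2 := by
  have sin_lt_self := sin_lt h0
  have sin_gt := sin_gt_sub_cube h0
  have sin_pos : 0 < sin x := sin_pos_of_pos_of_le_two h0 h2
  have one_le : 1 ≤ x / sin x := (one_le_div sin_pos).2 sin_lt_self.le
  rw [abs_of_nonneg (sub_nonneg.2 one_le), sub_le_iff_le_add, div_le_iff₀ sin_pos]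
  calc x ≤ x + x ^ 3 * (4 - x ^ 2) / 12 := le_add_of_nonneg_right <|
        div_nonneg (mul_nonneg (by positivity) (by nlinarith)) (by norm_num)
    _ = (x ^ 2 / 2 + 1) * (x - x ^ 3 / 6) := by ring
    _ ≤ (x ^ 2 / 2 + 1) * sin x := mul_le_mul_of_nonneg_left sin_gt.le (by positivity)

lemma limitWeightSum_sub_sq_le {n : ℕ} (hn : 4 ≤ n) (k : ℕ) :
    limitWeightSum ((k + 1 / 2) * (2 * π / n)) - (2 * π / n) ^ 2 ≤
      4 * (2 * π / n) * critWeightSum n k := by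
  have closed := four_mul_critWeightSum (by omega : 3 ≤ n) k
  have hn' : (4 : ℝ) ≤ n := by exact_mod_cast hn
  have h_pos : 0 < 2 * π / n := by positivity
  have h_le_two : 2 * π / n ≤ 2 := by
    rw [div_le_iff₀ (by positivity)]
    linarith [pi_le_four]
  set h := 2 * π / n
  set y := (k + 1 / 2) * h with hy
  have full := abs_div_sin_sub_one_le h_pos h_le_two
  have half := abs_div_sin_sub_one_le (half_pos h_pos) (by linarith)
  have expand : 4 * h * critWeightSum n k = limitWeightSum y + sin (2 * y) * (h / sin h - 1) -
      4 * (sin y * (h / 2 / sin (h / 2) - 1)) := by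
    rw [show (2 * k + 1) * h = 2 * y by rw [hy]; ring] at closed
    rw [limitWeightSum]
    linear_combination h * closed - 2 * hy
  have bound {a b c : ℝ} (ha : |a| ≤ 1) (hb : |b| ≤ c) : |a * b| ≤ c := by
    rw [abs_mul]
    exact (mul_le_of_le_one_left (abs_nonneg b) ha).trans hb
  have full_error := (abs_le.1 (bound (abs_sin_le_one (2 * y)) full)).1
  have half_error := (abs_le.1 (bound (abs_sin_le_one y) half)).2
  linarith

lemma angle_lt_of_critWeightSum_neg {n k : ℕ} (hn : 4 ≤ n) (hkn : 2 * k + 1 ≤ n)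
    (hs : critWeightSum n k < 0) {u : ℝ} (hu : u ∈ Set.Icc (π / 2) π)
    (hroot : limitWeightSum u = 0) :
    (k + 1 / 2) * (2 * π / n) < u + (2 * π / n) ^ 2 / 3 := by
  have hn' : (0 : ℝ) < n := by exact_mod_cast (by omega : 0 < n)
  have hh : 0 < 2 * π / n := by positivity
  rcases lt_or_ge ((k + 1 / 2) * (2 * π / n)) u with h | h
  · exact h.trans (lt_add_of_pos_right u (by positivity))
  have le_pi : (k + 1 / 2) * (2 * π / n) ≤ π := by
    have hkn' : (2 * k + 1 : ℝ) ≤ n := by exact_mod_cast hkn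
    calc (k + 1 / 2) * (2 * π / n) = π * ((2 * k + 1) / n) := by ring
      _ ≤ π := mul_le_of_le_one_right pi_pos.le ((div_le_one hn').2 hkn')
  have growth := three_mul_sub_le_limitWeightSum_sub
    (two_pi_div_three_lt_of_limitWeightSum_eq_zero hu hroot).le h le_pi
  have upper := limitWeightSum_sub_sq_le hn k
  have := mul_neg_of_pos_of_neg (mul_pos four_pos hh) hs
  linarith

namespace IsCriticalIndex

variable {n k : ℕ}

lemma critAlpha_le (hk : IsCriticalIndex n k) : critAlpha n k ≤ 2 * k + 1 := by
  rw [hk.critAlpha_eq]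
  linarith [hk.boundaryFraction_le_one]

theorem critAlpha_div_le (hk : IsCriticalIndex n k) {K : ℝ} (hK : K ∈ Set.Ioo (1 / 4 : ℝ) (1 / 2))
    (hroot : limitWeightSum (2 * π * K) = 0) :
    critAlpha n k / n ≤ 2 * K + 2 / n + 4 * π / (3 * (n : ℝ) ^ 2) := by
  have two_le := hk.two_le
  have two_mul_lt := hk.two_mul_lt
  have angle_lt := angle_lt_of_critWeightSum_neg (by omega) (by omega) hk.sum_pred_neg
    ⟨by nlinarith [hK.1, pi_pos], by nlinarith [hK.2, pi_pos]⟩ hroot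
  rw [Nat.cast_pred (by omega)] at angle_lt
  have hn' : (0 : ℝ) < n := by exact_mod_cast (by omega : 0 < n)
  have index_le : (2 * k - 1 : ℝ) / n ≤ 2 * K + 4 * π / (3 * n ^ 2) := by
    refine le_of_mul_le_mul_left ?_ pi_pos
    calc π * ((2 * k - 1) / n) = (k - 1 + 1 / 2) * (2 * π / n) := by ring
      _ ≤ 2 * π * K + (2 * π / n) ^ 2 / 3 := angle_lt.le
      _ = π * (2 * K + 4 * π / (3 * n ^ 2)) := by
        field_simp
        ring
  calc critAlpha n k / n ≤ (2 * k + 1) / n := by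
        gcongr
        exact hk.critAlpha_le
    _ = (2 * k - 1) / n + 2 / n := by ring
    _ ≤ 2 * K + 2 / n + 4 * π / (3 * (n : ℝ) ^ 2) := by linarith

end IsCriticalIndex

/-! ### Connectivity -/

/-- The densities `(∑ x l) / (N - 1)` of the feasible vectors for `(N, p) = (m * n, m)`; the paper's
`μ^{(N,p)}` is the greatest element of this set. -/
def connectivities (m n : ℕ) : Set ℝ :=
  {μ | ∃ x, feasible (m * n) m x ∧ μ = (∑ l ∈ Icc 1 (m * n - 1), x l) / ((m * n : ℝ) - 1)}

namespace IsCriticalIndex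

variable {n k : ℕ}

theorem critAlpha_div_mem_upperBounds (hk : IsCriticalIndex n k) {m : ℕ} (hm : 0 < m) :
    critAlpha n k / n ∈ upperBounds (connectivities m n) := by
  rintro _ ⟨x, hx, rfl⟩
  have hkn : (2 * k + 1 : ℝ) ≤ n := by exact_mod_cast hk.two_mul_lt
  have hk2 : (2 : ℝ) ≤ k := by exact_mod_cast hk.two_le
  have hm' : (1 : ℝ) ≤ m := by exact_mod_cast hm
  rw [div_le_div_iff₀ (by nlinarith) (by linarith)]
  calc (∑ l ∈ Icc 1 (m * n - 1), x l) * n ≤ (m * critAlpha n k - 1) * n := by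
        gcongr
        exact hk.sum_le_of_feasible hm hx
    _ ≤ critAlpha n k * (m * n - 1) := by linarith [hk.critAlpha_le]

theorem exists_connectivity_ge (hk : IsCriticalIndex n k) :
    ∀ᶠ m : ℕ in atTop, ∃ μ ∈ connectivities m n,
      (m * critAlpha n k - 5) / ((m * n : ℝ) - 1) ≤ μ := by
  filter_upwards [hk.exists_feasible_le_sum, eventually_gt_atTop 0] with m ⟨x, hx, hsum⟩ hm
  have one_le : (1 : ℝ) ≤ m * n := by
    have := hk.two_mul_lt
    exact_mod_cast Nat.mul_pos hm (by omega)
  exact ⟨_, ⟨x, hx, rfl⟩, div_le_div_of_nonneg_right hsum (sub_nonneg.2 one_le)⟩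

theorem tendsto_of_isGreatest_connectivities (hk : IsCriticalIndex n k) {mu : ℕ → ℝ}
    (hmu : ∀ᶠ m in atTop, IsGreatest (connectivities m n) (mu m)) :
    Tendsto mu atTop (nhds (critAlpha n k / n)) := by
  have hn : (n : ℝ) ≠ 0 := Nat.cast_ne_zero.2 (by have := hk.two_mul_lt; omega)
  have lower : Tendsto (fun m : ℕ => (m * critAlpha n k - 5) / ((m * n : ℝ) - 1)) atTop
      (nhds (critAlpha n k / n)) :=
    (tendsto_add_mul_div_add_mul_atTop_nhds (-5) (-1) _ hn).congr fun m => by ring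
  refine tendsto_of_tendsto_of_tendsto_of_le_of_le' lower tendsto_const_nhds ?_ ?_
  · filter_upwards [hk.exists_connectivity_ge, hmu] with m ⟨μ, hμ, hle⟩ hmax
    exact hle.trans (hmax.2 hμ)
  · filter_upwards [eventually_gt_atTop 0, hmu] with m hm hmax
    exact hk.critAlpha_div_mem_upperBounds hm hmax.1

end IsCriticalIndex

/-- For `Ñ ≥ 5` with `α_Ñ = 2k_c - 1 - 2 s_{k_c-1}/(s_{k_c} - s_{k_c-1})` and `K_c` the
unique root of `4πK + sin(4πK) - 4 sin(2πK) = 0` in `(1/4, 1/2)`: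
`α_Ñ/Ñ ≤ 2K_c + 2/Ñ + 4π/(3Ñ²)`; moreover, for each `m ≥ 1`, the maximum connectivity
`μ^{(mÑ, m)}` satisfies `μ^{(mÑ, m)} ≤ α_Ñ/Ñ`, and `μ^{(mÑ, m)} → α_Ñ/Ñ` as `m → ∞`. -/
theorem alpha_bound_and_limit (Nt : ℕ) (hNt : 5 ≤ Nt) (s : ℕ → ℝ)
    (hs : ∀ k, s k = ∑ l ∈ Finset.Icc 1 k,
      Real.cos (2 * π * l / Nt) * (-1 + Real.cos (2 * π * l / Nt)))
    (kc : ℕ) (hkc : IsLeast {k | k ∈ Finset.Icc 1 (Nt - 1) ∧ 0 ≤ s k} kc)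
    (alpha : ℝ)
    (halpha : alpha = 2 * (kc : ℝ) - 1 - 2 * s (kc - 1) / (s kc - s (kc - 1)))
    (Kc : ℝ) (hKc : Kc ∈ Set.Ioo (1 / 4 : ℝ) (1 / 2))
    (hKc0 : 4 * π * Kc + Real.sin (4 * π * Kc) - 4 * Real.sin (2 * π * Kc) = 0)
    (mu : ℕ → ℝ)
    (hmu : ∀ m : ℕ, 1 ≤ m →
      IsGreatest
        {μ : ℝ | ∃ x : ℕ → ℝ, feasible (m * Nt) m x ∧
          μ = (∑ l ∈ Finset.Icc 1 (m * Nt - 1), x l) / ((m * Nt : ℝ) - 1)}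
        (mu m)) :
    alpha / Nt ≤ 2 * Kc + 2 / Nt + 4 * π / (3 * (Nt : ℝ) ^ 2) ∧
    (∀ m : ℕ, 1 ≤ m → mu m ≤ alpha / Nt) ∧
    Tendsto mu atTop (nhds (alpha / Nt)) := by
  obtain rfl : s = critWeightSum Nt := funext fun k => by
    simp [hs, critWeightSum, critWeight, gridCos]
  have hk : IsCriticalIndex Nt kc := isCriticalIndex_of_isLeast hNt hkc
  obtain rfl : alpha = critAlpha Nt kc := halpha
  have root : limitWeightSum (2 * π * Kc) = 0 := by
    rw [← hKc0, limitWeightSum]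
    ring_nf
  have greatest : ∀ m, 1 ≤ m → IsGreatest (connectivities m Nt) (mu m) := hmu
  exact ⟨hk.critAlpha_div_le hKc root,
    fun m hm => hk.critAlpha_div_mem_upperBounds hm (greatest m hm).1,
    hk.tendsto_of_isGreatest_connectivities ((eventually_ge_atTop 1).mono greatest)⟩
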